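/- Let β ∈ F_2[x,y,z,w] lie in the F_2-subalgebra generated by b_4, b_6, b_7, b_8, and suppose κ(β) = β. Then β lies in the F_2-subalgebra generated by a_8, a_12, a_14, a_15. -/

import Mathlib

noncomputable section

open MvPolynomial

/-- The set of `𝔽₂`-linear combinations (i.e. subset sums) of the family `v`. -/
def spanF2 {R : Type*} [CommRing R] {n : ℕ} (v : Fin n → R) : Finset R :=
  letI := Classical.decEq R
  Finset.image (fun s : Finset (Fin n) => ∑ j ∈ s, v j) Finset.univ

/-- The Dickson invariant `D_i(v₁, …, vₙ)`: the `(2^n - 2^(n-i))`-th elementary symmetric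
polynomial of the `2^n` elements of the `𝔽₂`-linear span of `v₁, …, vₙ`. -/
def dickson {R : Type*} [CommRing R] {n : ℕ} (v : Fin n → R) (i : ℕ) : R :=
  (spanF2 v).val.esymm (2 ^ n - 2 ^ (n - i))

/-- The product `∏_{α ∈ span_{𝔽₂}(v)} (w + α)`. -/
def prodAdd {R : Type*} [CommRing R] {n : ℕ} (v : Fin n → R) (w : R) : R :=
  ∏ α ∈ spanF2 v, (w + α)

/-- The polynomial ring `𝔽₂[x, y, z, w]`. -/
abbrev R4 := MvPolynomial (Fin 4) (ZMod 2)

def xP : R4 := X 0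
def yP : R4 := X 1
def zP : R4 := X 2
def wP : R4 := X 3

def a8 : R4 := dickson ![xP, yP, zP, wP] 1
def a12 : R4 := dickson ![xP, yP, zP, wP] 2
def a14 : R4 := dickson ![xP, yP, zP, wP] 3
def a15 : R4 := dickson ![xP, yP, zP, wP] 4

def b4 : R4 := dickson ![xP, yP, zP] 1
def b6 : R4 := dickson ![xP, yP, zP] 2
def b7 : R4 := dickson ![xP, yP, zP] 3
def b8 : R4 := prodAdd ![xP, yP, zP] wP

def c2 : R4 := dickson ![xP, yP] 1
def c3 : R4 := dickson ![xP, yP] 2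
def c4' : R4 := prodAdd ![xP, yP] zP
def c4'' : R4 := prodAdd ![xP, yP] wP

/-- The `𝔽₂`-algebra automorphism `κ` of `𝔽₂[x,y,z,w]` fixing `x` and `y` and
exchanging `z` and `w`. -/
def kappaEnd : R4 →ₐ[ZMod 2] R4 := aeval ![xP, yP, wP, zP]

/-! Every transvection fixes `β`: those adding to a variable another one that is not the last fix
the whole parabolic algebra, and conjugating them by a permutation of the variables that fixes `β`
and moves the last variable gives the remaining ones. Over `𝔽₂` the transvections generate the
general linear group, so it remains to see that the polynomials fixed by that group form the
Dickson algebra.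

The polynomial whose roots are the linear forms is linearized, so its nonzero coefficients are the
Dickson invariants (and `1`). Hence the polynomial ring is generated over the Dickson algebra by
the roots of this separable polynomial. By transcendence degree the Dickson invariants are
algebraically independent, so the Dickson algebra is integrally closed and is therefore the ring of
invariants of the automorphisms of the polynomial ring over it. Such an automorphism permutes the
linear forms, so it is a linear substitution. -/

open scoped Polynomial

lemma sum_injective_of_linearIndependent {K M ι : Type*} [Semiring K] [Nontrivial K]
    [AddCommMonoid M] [Module K M] {w : ι → M} (hw : LinearIndependent K w) :
    Function.Injective fun s : Finset ι => ∑ j ∈ s, w j := by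
  classical
  intro s t hst
  have hsingle : ∑ j ∈ s, Finsupp.single j (1 : K) = ∑ j ∈ t, Finsupp.single j 1 :=
    hw (by simpa using hst)
  ext j
  have hj : (if j ∈ s then (1 : K) else 0) = if j ∈ t then 1 else 0 := by
    simpa [Finsupp.finsetSum_apply, Finsupp.single_apply] using DFunLike.congr_fun hsingle j
  by_cases hs : j ∈ s <;> by_cases ht : j ∈ t <;> simp_all

section Span

variable {R : Type*} [CommRing R] [Algebra (ZMod 2) R] {n : ℕ} {v : Fin n → R}

lemma mem_spanF2 {a : R} : a ∈ spanF2 v ↔ a ∈ Submodule.span (ZMod 2) (Set.range v) := by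
  simp only [spanF2, Finset.mem_image, Finset.mem_univ, true_and]
  constructor
  · rintro ⟨s, rfl⟩
    exact sum_mem fun j _ => Submodule.subset_span ⟨j, rfl⟩
  · intro ha
    obtain ⟨c, rfl⟩ := (Submodule.mem_span_range_iff_exists_fun (ZMod 2)).1 ha
    have zero_or_one : ∀ t : ZMod 2, t = 0 ∨ t = 1 := by decide
    refine ⟨Finset.univ.filter (c · = 1), ?_⟩
    rw [Finset.sum_filter]
    refine Finset.sum_congr rfl fun j _ => ?_
    rcases zero_or_one (c j) with h | h <;> simp [h]

lemma map_spanF2_of_forall_mem_span {f : R →ₐ[ZMod 2] R} (hf : Function.Injective f)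
    (hfv : ∀ i, f (v i) ∈ Submodule.span (ZMod 2) (Set.range v)) :
    (spanF2 v).map ⟨f, hf⟩ = spanF2 v := by
  refine Finset.eq_of_subset_of_card_le (fun b hb => ?_) (Finset.card_map _).ge
  obtain ⟨a, ha, rfl⟩ := Finset.mem_map.1 hb
  have hle : Submodule.span (ZMod 2) (Set.range v) ≤
      (Submodule.span (ZMod 2) (Set.range v)).comap f.toLinearMap :=
    Submodule.span_le.2 (Set.range_subset_iff.2 hfv)
  exact mem_spanF2.2 (hle (mem_spanF2.1 ha))

lemma map_dickson_of_forall_mem_span {f : R →ₐ[ZMod 2] R} (hf : Function.Injective f)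
    (hfv : ∀ i, f (v i) ∈ Submodule.span (ZMod 2) (Set.range v)) (k : ℕ) :
    f (dickson v k) = dickson v k := by
  have map_esymm (s : Multiset R) (m : ℕ) : f (s.esymm m) = (s.map f).esymm m := by
    simp only [Multiset.esymm, Multiset.powersetCard_map, Multiset.map_map, map_multiset_sum,
      Function.comp_def, map_multiset_prod]
  rw [dickson, map_esymm]
  exact congrArg (fun s : Finset R => s.val.esymm _) (map_spanF2_of_forall_mem_span hf hfv)

lemma prodAdd_add_of_mem_span (w : R) {u : R}
    (hu : u ∈ Submodule.span (ZMod 2) (Set.range v)) : prodAdd v (w + u) = prodAdd v w := by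
  refine Finset.prod_nbij' (u + ·) (· - u) ?_ ?_ ?_ ?_ ?_
  · exact fun a ha => mem_spanF2.2 (add_mem hu (mem_spanF2.1 ha))
  · exact fun a ha => mem_spanF2.2 (sub_mem (mem_spanF2.1 ha) hu)
  · exact fun a _ => add_sub_cancel_left u a
  · exact fun a _ => add_sub_cancel u a
  · exact fun a _ => add_assoc w u a

lemma map_prodAdd_of_forall_mem_span {f : R →ₐ[ZMod 2] R} (hf : Function.Injective f)
    (hfv : ∀ i, f (v i) ∈ Submodule.span (ZMod 2) (Set.range v)) {w : R}
    (hfw : f w - w ∈ Submodule.span (ZMod 2) (Set.range v)) :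
    f (prodAdd v w) = prodAdd v w :=
  calc f (prodAdd v w) = prodAdd v (f w) := by
        conv_rhs => rw [prodAdd, ← map_spanF2_of_forall_mem_span hf hfv, Finset.prod_map]
        simp [prodAdd, map_prod]
    _ = prodAdd v (w + (f w - w)) := by rw [add_sub_cancel]
    _ = prodAdd v w := prodAdd_add_of_mem_span w hfw

lemma spanF2_eq_map_univ (hv : LinearIndependent (ZMod 2) v) :
    spanF2 v = Finset.univ.map ⟨_, sum_injective_of_linearIndependent hv⟩ := by
  classical
  ext a
  simp [spanF2]

lemma card_spanF2 (hv : LinearIndependent (ZMod 2) v) : (spanF2 v).card = 2 ^ n := by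
  simp [spanF2_eq_map_univ hv]

end Span

section Linearized

variable (p : ℕ) (R : Type*) [CommRing R]

/-- The `p`-linearized polynomials over `R`, i.e. the `R`-linear combinations of the monomials
`X ^ p ^ i`. -/
def linearizedPolynomials : Submodule R R[X] :=
  Submodule.span R (Set.range fun i : ℕ => Polynomial.X ^ p ^ i)

variable {p R} {f : R[X]}

lemma X_mem_linearizedPolynomials : Polynomial.X ∈ linearizedPolynomials p R :=
  Submodule.subset_span ⟨0, by simp⟩

lemma coeff_eq_zero_of_mem_linearizedPolynomials (hf : f ∈ linearizedPolynomials p R) {k : ℕ}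
    (hk : ∀ i, k ≠ p ^ i) : f.coeff k = 0 := by
  have hle : linearizedPolynomials p R ≤ LinearMap.ker (Polynomial.lcoeff R k) := by
    refine Submodule.span_le.2 (Set.range_subset_iff.2 fun i => ?_)
    simp [Polynomial.coeff_X_pow, hk i]
  exact hle hf

variable [ExpChar R p]

lemma pow_mem_linearizedPolynomials (hf : f ∈ linearizedPolynomials p R) :
    f ^ p ∈ linearizedPolynomials p R := by
  induction hf using Submodule.span_induction with
  | mem g hg =>
    obtain ⟨i, rfl⟩ := hg
    exact Submodule.subset_span ⟨i + 1, by simp [pow_succ, pow_mul]⟩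
  | zero => rw [zero_pow (expChar_ne_zero R p)]; exact zero_mem _
  | add g h _ _ hg hh => rw [add_pow_expChar]; exact add_mem hg hh
  | smul a g _ hg => rw [smul_pow]; exact Submodule.smul_mem _ _ hg

lemma comp_X_sub_C_of_mem_linearizedPolynomials (hf : f ∈ linearizedPolynomials p R) (a : R) :
    f.comp (Polynomial.X - Polynomial.C a) = f - Polynomial.C (f.eval a) := by
  induction hf using Submodule.span_induction with
  | mem g hg =>
    obtain ⟨i, rfl⟩ := hg
    simp [sub_pow_expChar_pow]
  | zero => simp
  | add g h _ _ hg hh =>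
    rw [Polynomial.add_comp, hg, hh, Polynomial.eval_add, map_add]
    ring
  | smul b g _ hg =>
    rw [Polynomial.smul_comp, hg, smul_sub, Polynomial.eval_smul, Polynomial.smul_C]

end Linearized

section DicksonPolynomial

variable {R : Type*} [CommRing R]

lemma prod_X_sub_C_sum_mem_linearizedPolynomials [CharP R 2] {ι : Type*} (v : ι → R)
    (S : Finset ι) :
    ∏ t ∈ S.powerset, (Polynomial.X - Polynomial.C (∑ j ∈ t, v j)) ∈
      linearizedPolynomials 2 R := by
  classical
  induction S using Finset.induction_on with
  | empty => simpa using X_mem_linearizedPolynomials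
  | insert a S ha ih =>
    rw [Finset.prod_powerset_insert ha]
    set f := ∏ t ∈ S.powerset, (Polynomial.X - Polynomial.C (∑ j ∈ t, v j)) with hf
    have translate : ∏ t ∈ S.powerset, (Polynomial.X - Polynomial.C (∑ j ∈ insert a t, v j)) =
        f.comp (Polynomial.X - Polynomial.C (v a)) := by
      rw [hf, Polynomial.prod_comp]
      refine Finset.prod_congr rfl fun t ht => ?_
      rw [Finset.sum_insert fun h => ha (Finset.mem_powerset.1 ht h)]
      simp [sub_sub]
    have square : f * (f - Polynomial.C (f.eval (v a))) = f ^ 2 - f.eval (v a) • f := by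
      rw [Polynomial.smul_eq_C_mul]
      ring
    rw [translate, comp_X_sub_C_of_mem_linearizedPolynomials ih, square]
    exact sub_mem (pow_mem_linearizedPolynomials ih) (Submodule.smul_mem _ _ ih)

/-- The Dickson polynomial of `v`: the monic polynomial whose roots are the elements of the
`𝔽₂`-linear span of `v`. -/
def dicksonPolynomial {n : ℕ} (v : Fin n → R) : R[X] :=
  ∏ α ∈ spanF2 v, (Polynomial.X - Polynomial.C α)

/-- The Dickson algebra of `v`: the `𝔽₂`-subalgebra generated by the Dickson invariants
`D₁(v), …, Dₙ(v)`. -/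
def dicksonAlgebra [Algebra (ZMod 2) R] {n : ℕ} (v : Fin n → R) : Subalgebra (ZMod 2) R :=
  Algebra.adjoin (ZMod 2) (Set.range fun i : Fin n => dickson v (i + 1))

variable [Algebra (ZMod 2) R] [Nontrivial R] {n : ℕ} {v : Fin n → R}

lemma natDegree_dicksonPolynomial (hv : LinearIndependent (ZMod 2) v) :
    (dicksonPolynomial v).natDegree = 2 ^ n := by
  rw [dicksonPolynomial, Polynomial.natDegree_finsetProd_X_sub_C_eq_card, card_spanF2 hv]

lemma dicksonPolynomial_mem_linearizedPolynomials (hv : LinearIndependent (ZMod 2) v) :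
    dicksonPolynomial v ∈ linearizedPolynomials 2 R := by
  have : CharP R 2 := charP_of_injective_algebraMap (algebraMap (ZMod 2) R).injective 2
  rw [dicksonPolynomial, spanF2_eq_map_univ hv, Finset.prod_map, ← Finset.powerset_univ]
  exact prod_X_sub_C_sum_mem_linearizedPolynomials v Finset.univ

lemma coeff_two_pow_dicksonPolynomial (hv : LinearIndependent (ZMod 2) v) {j : ℕ} (hj : j ≤ n) :
    (dicksonPolynomial v).coeff (2 ^ j) = dickson v (n - j) := by
  have : CharP R 2 := charP_of_injective_algebraMap (algebraMap (ZMod 2) R).injective 2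
  have hcard : Multiset.card (spanF2 v).val = 2 ^ n := card_spanF2 hv
  have hle : 2 ^ j ≤ Multiset.card (spanF2 v).val :=
    hcard ▸ Nat.pow_le_pow_right two_pos hj
  have hcoeff := Multiset.prod_X_sub_C_coeff (spanF2 v).val hle
  rw [CharTwo.neg_eq, one_pow, one_mul, hcard] at hcoeff
  rw [dickson, Nat.sub_sub_self hj, ← hcoeff]
  rfl

lemma coeff_dicksonPolynomial_mem_dicksonAlgebra (hv : LinearIndependent (ZMod 2) v) (k : ℕ) :
    (dicksonPolynomial v).coeff k ∈ dicksonAlgebra v := by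
  by_cases hk : ∃ j, k = 2 ^ j
  · obtain ⟨j, rfl⟩ := hk
    rcases lt_trichotomy j n with hjn | rfl | hnj
    · rw [coeff_two_pow_dicksonPolynomial hv hjn.le]
      refine Algebra.subset_adjoin ⟨⟨n - j - 1, by omega⟩, ?_⟩
      exact congrArg (dickson v) (Nat.sub_add_cancel (Nat.sub_pos_of_lt hjn))
    · rw [coeff_two_pow_dicksonPolynomial hv le_rfl, Nat.sub_self]
      simp [dickson, Multiset.esymm, one_mem]
    · rw [Polynomial.coeff_eq_zero_of_natDegree_lt]
      · exact zero_mem _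
      · rw [natDegree_dicksonPolynomial hv]
        exact Nat.pow_lt_pow_right one_lt_two hnj
  · push Not at hk
    rw [coeff_eq_zero_of_mem_linearizedPolynomials
      (dicksonPolynomial_mem_linearizedPolynomials hv) hk]
    exact zero_mem _

end DicksonPolynomial

section Galois

variable {A B : Type*} [CommRing A] [CommRing B] [Algebra A B] {s : Finset B}

lemma isIntegral_of_adjoin_eq_top (hs : Algebra.adjoin A (s : Set B) = ⊤)
    (hlift : ∏ α ∈ s, (Polynomial.X - Polynomial.C α) ∈ Polynomial.lifts (algebraMap A B)) :
    Algebra.IsIntegral A B := by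
  have hmonic := Polynomial.monic_prod_X_sub_C id s
  obtain ⟨f, hf, -, hfm⟩ := Polynomial.lifts_and_natDegree_eq_and_monic hlift hmonic
  refine ⟨fun b => ?_⟩
  have hle : Algebra.adjoin A (s : Set B) ≤ integralClosure A B := by
    refine Algebra.adjoin_le fun α hα => ⟨f, hfm, ?_⟩
    rw [← Polynomial.eval_map, hf, Polynomial.eval_prod]
    exact Finset.prod_eq_zero hα (by simp)
  exact hle (hs ▸ Algebra.mem_top)

lemma exists_separable_isSplittingField_of_adjoin_eq_top {K L : Type*} [Field K] [Field L]
    [Algebra A K] [Algebra B L] [IsFractionRing B L] [Algebra K L] [Algebra A L]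
    [IsScalarTower A K L] [IsScalarTower A B L] (hs : Algebra.adjoin A (s : Set B) = ⊤)
    (hlift : ∏ α ∈ s, (Polynomial.X - Polynomial.C α) ∈ Polynomial.lifts (algebraMap A B)) :
    ∃ g : K[X], g.Separable ∧ g.IsSplittingField K L := by
  obtain ⟨f, hf⟩ := (Polynomial.mem_lifts _).1 hlift
  set g := f.map (algebraMap A K) with hg
  have hprod : g.map (algebraMap K L) =
      ∏ α ∈ s, (Polynomial.X - Polynomial.C (algebraMap B L α)) := by
    rw [hg, Polynomial.map_map, ← IsScalarTower.algebraMap_eq, IsScalarTower.algebraMap_eq A B L,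
      ← Polynomial.map_map, hf, Polynomial.map_prod]
    simp
  have hg0 : g ≠ 0 := by
    rintro h0
    refine (Polynomial.monic_prod_X_sub_C (algebraMap B L) s).ne_zero ?_
    rw [← hprod, h0, Polynomial.map_zero]
  refine ⟨g, ?_, isSplittingField_iff_intermediateField.2 ⟨?_, ?_⟩⟩
  · rw [← Polynomial.separable_map (algebraMap K L), hprod,
      Polynomial.separable_prod_X_sub_C_iff']
    exact fun α _ β _ h => IsFractionRing.injective B L h
  · rw [hprod]
    exact Polynomial.Splits.prod fun α _ => Polynomial.Splits.X_sub_C _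
  · have hle : Algebra.adjoin A (s : Set B) ≤
        ((IntermediateField.adjoin K (g.rootSet L)).toSubalgebra.restrictScalars A).comap
          (IsScalarTower.toAlgHom A B L) := by
      refine Algebra.adjoin_le fun α hα => IntermediateField.subset_adjoin _ _ ?_
      rw [Polynomial.mem_rootSet_of_ne hg0, ← Polynomial.eval_map_algebraMap, hprod,
        Polynomial.eval_prod]
      exact Finset.prod_eq_zero hα (by simp)
    have hmem (b : B) : algebraMap B L b ∈ IntermediateField.adjoin K (g.rootSet L) :=
      hle (hs ▸ Algebra.mem_top)
    refine eq_top_iff.2 fun x _ => ?_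
    obtain ⟨b, c, -, rfl⟩ := IsFractionRing.div_surjective (A := B) x
    exact div_mem (hmem b) (hmem c)

theorem isInvariant_algEquiv_of_adjoin_eq_top [IsDomain A] [IsDomain B] [FaithfulSMul A B]
    [IsIntegrallyClosed A] [IsIntegrallyClosed B] (hs : Algebra.adjoin A (s : Set B) = ⊤)
    (hlift : ∏ α ∈ s, (Polynomial.X - Polynomial.C α) ∈ Polynomial.lifts (algebraMap A B)) :
    Algebra.IsInvariant A B (B ≃ₐ[A] B) := by
  let _ : Algebra (FractionRing A) (FractionRing B) := FractionRing.liftAlgebra A _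
  obtain ⟨g, hsep, hsplit⟩ := exists_separable_isSplittingField_of_adjoin_eq_top
    (K := FractionRing A) (L := FractionRing B) hs hlift
  have := Polynomial.IsSplittingField.finiteDimensional (FractionRing B) g
  have := IsGalois.of_separable_splitting_field (E := FractionRing B) hsep
  have := isIntegral_of_adjoin_eq_top hs hlift
  have : IsIntegralClosure B A (FractionRing B) := .of_isIntegrallyClosed _ _ _
  exact Algebra.isInvariant_of_isGalois' A (FractionRing A) (FractionRing B) B

lemma algEquiv_apply_mem_of_prod_mem_lifts [IsDomain B]
    (hlift : ∏ α ∈ s, (Polynomial.X - Polynomial.C α) ∈ Polynomial.lifts (algebraMap A B))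
    (σ : B ≃ₐ[A] B) {α : B} (hα : α ∈ s) : σ α ∈ s := by
  obtain ⟨f, hf⟩ := (Polynomial.mem_lifts _).1 hlift
  have root_iff (b : B) : Polynomial.aeval b f = 0 ↔ b ∈ s := by
    rw [← Polynomial.eval_map_algebraMap, hf, Polynomial.eval_prod, Finset.prod_eq_zero_iff]
    simp [sub_eq_zero]
  rw [← root_iff] at hα ⊢
  have h := Polynomial.aeval_algHom_apply (σ : B →ₐ[A] B) α f
  rw [hα, map_zero] at h
  exact h

end Galois

section LinearSubstitution

variable {m K : Type*} [Fintype m] [CommRing K]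

lemma toMvPolynomial_eq_sum_smul (M : Matrix m m K) (i : m) :
    M.toMvPolynomial i = ∑ j, M i j • X j := by
  simp only [Matrix.toMvPolynomial, X, smul_monomial, smul_eq_mul, mul_one]

lemma toMvPolynomial_injective :
    Function.Injective (Matrix.toMvPolynomial : Matrix m m K → m → MvPolynomial m K) := by
  refine fun M N hMN => funext fun i =>
    (linearIndependent_X m K).fintypeLinearCombination_injective ?_
  simpa [Fintype.linearCombination_apply, toMvPolynomial_eq_sum_smul] using congrFun hMN i

lemma bind₁_toMvPolynomial_mul (M N : Matrix m m K) (p : MvPolynomial m K) :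
    bind₁ (M * N).toMvPolynomial p = bind₁ N.toMvPolynomial (bind₁ M.toMvPolynomial p) := by
  rw [bind₁_bind₁, funext (Matrix.toMvPolynomial_mul M N)]

lemma exists_eq_bind₁_toMvPolynomial {φ : MvPolynomial m K →ₐ[K] MvPolynomial m K}
    (hφ : ∀ i, φ (X i) ∈ Submodule.span K (Set.range (X : m → MvPolynomial m K))) :
    ∃ M : Matrix m m K, φ = bind₁ M.toMvPolynomial := by
  choose M hM using fun i => (Submodule.mem_span_range_iff_exists_fun K).1 (hφ i)
  refine ⟨Matrix.of M, algHom_ext fun i => ?_⟩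
  rw [bind₁_X_right, toMvPolynomial_eq_sum_smul, ← hM i]
  rfl

variable [DecidableEq m]

lemma bind₁_toMvPolynomial_one (p : MvPolynomial m K) :
    bind₁ (1 : Matrix m m K).toMvPolynomial p = p := by
  rw [Matrix.toMvPolynomial_one, bind₁_X_left, AlgHom.id_apply]

lemma bind₁_toMvPolynomial_injective {M : Matrix m m K} (hM : IsUnit M.det) :
    Function.Injective (bind₁ M.toMvPolynomial) :=
  Function.LeftInverse.injective (g := bind₁ M⁻¹.toMvPolynomial) fun p => by
    rw [← bind₁_toMvPolynomial_mul, Matrix.mul_nonsing_inv M hM, bind₁_toMvPolynomial_one]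

lemma exists_isUnit_det_and_eq_bind₁_toMvPolynomial
    {σ : MvPolynomial m K ≃ₐ[K] MvPolynomial m K}
    (hσ : ∀ i, σ (X i) ∈ Submodule.span K (Set.range (X : m → MvPolynomial m K)))
    (hσ' : ∀ i, σ.symm (X i) ∈ Submodule.span K (Set.range (X : m → MvPolynomial m K))) :
    ∃ M : Matrix m m K, IsUnit M.det ∧ ∀ p, σ p = bind₁ M.toMvPolynomial p := by
  obtain ⟨M, hM⟩ := exists_eq_bind₁_toMvPolynomial (φ := σ.toAlgHom) hσ
  obtain ⟨N, hN⟩ := exists_eq_bind₁_toMvPolynomial (φ := σ.symm.toAlgHom) hσ'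
  refine ⟨M, Matrix.isUnit_det_of_right_inverse (B := N) (toMvPolynomial_injective ?_),
    DFunLike.congr_fun hM⟩
  funext i
  rw [← bind₁_X_right (M * N).toMvPolynomial, bind₁_toMvPolynomial_mul, ← hM, ← hN,
    Matrix.toMvPolynomial_one]
  exact σ.symm_apply_apply (X i)

lemma toMvPolynomial_transvection (i j : m) (c : K) (k : m) :
    (Matrix.transvection i j c).toMvPolynomial k = X k + if k = i then c • X j else 0 := by
  rw [Matrix.transvection, Matrix.toMvPolynomial_add, Matrix.toMvPolynomial_one, Pi.add_apply,
    toMvPolynomial_eq_sum_smul]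
  rcases eq_or_ne k i with rfl | hki
  · simp [Matrix.single_apply, ite_smul]
  · simp [hki, hki.symm]

lemma rename_bind₁_transvection (e : Equiv.Perm m) (i j : m) (c : K) (p : MvPolynomial m K) :
    rename e (bind₁ (Matrix.transvection i j c).toMvPolynomial p) =
      bind₁ (Matrix.transvection (e i) (e j) c).toMvPolynomial (rename e p) := by
  rw [bind₁_rename, ← AlgHom.comp_apply]
  refine DFunLike.congr_fun (algHom_ext fun k => ?_) p
  by_cases hki : k = i <;> simp [toMvPolynomial_transvection, hki]

lemma bind₁_toMvPolynomial_eq_self_of_forall_transvection {p : MvPolynomial m (ZMod 2)}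
    (hp : ∀ i j, i ≠ j → bind₁ (Matrix.transvection i j 1).toMvPolynomial p = p)
    {M : Matrix m m (ZMod 2)} (hM : IsUnit M.det) : bind₁ M.toMvPolynomial p = p := by
  have eq_one_of_ne_zero : ∀ t : ZMod 2, t ≠ 0 → t = 1 := by decide
  refine Matrix.diagonal_transvection_induction_of_det_ne_zero
    (fun M => bind₁ M.toMvPolynomial p = p) M hM.ne_zero ?diagonal ?transvection ?mul
  case diagonal =>
    intro D hD
    rw [Matrix.det_diagonal, Finset.prod_ne_zero_iff] at hD
    obtain rfl : D = 1 := funext fun i => eq_one_of_ne_zero _ (hD i (Finset.mem_univ i))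
    rw [Matrix.diagonal_one', bind₁_toMvPolynomial_one]
  case transvection =>
    rintro ⟨i, j, hij, c⟩
    rw [Matrix.TransvectionStruct.toMatrix_mk]
    by_cases hc : c = 0
    · rw [hc, Matrix.transvection_zero, bind₁_toMvPolynomial_one]
    · rw [eq_one_of_ne_zero c hc, hp i j hij]
  case mul =>
    intro M N _ _ hM hN
    rw [bind₁_toMvPolynomial_mul, hM, hN]

end LinearSubstitution

section DicksonTheorem

variable {n : ℕ}

lemma adjoin_spanF2_X_eq_top (S : Subalgebra (ZMod 2) (MvPolynomial (Fin n) (ZMod 2))) :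
    Algebra.adjoin S (↑(spanF2 (X : Fin n → MvPolynomial (Fin n) (ZMod 2))) :
      Set (MvPolynomial (Fin n) (ZMod 2))) = ⊤ := by
  have hsub : Set.range (X : Fin n → MvPolynomial (Fin n) (ZMod 2)) ⊆
      ↑(spanF2 (X : Fin n → MvPolynomial (Fin n) (ZMod 2))) :=
    fun _ hp => mem_spanF2.2 (Submodule.subset_span hp)
  rw [← Algebra.adjoin_adjoin_of_tower (ZMod 2),
    eq_top_iff.2 (adjoin_range_X.ge.trans (Algebra.adjoin_mono hsub)), Algebra.coe_top,
    Algebra.adjoin_univ]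

lemma dicksonPolynomial_X_mem_lifts :
    dicksonPolynomial (X : Fin n → MvPolynomial (Fin n) (ZMod 2)) ∈ Polynomial.lifts
      (algebraMap (dicksonAlgebra (X : Fin n → MvPolynomial (Fin n) (ZMod 2)))
        (MvPolynomial (Fin n) (ZMod 2))) :=
  (Polynomial.lifts_iff_coeff_lifts _).2 fun k =>
    ⟨⟨_, coeff_dicksonPolynomial_mem_dicksonAlgebra (linearIndependent_X _ _) k⟩, rfl⟩

lemma algebraicIndependent_dickson_X :
    AlgebraicIndependent (ZMod 2) fun i : Fin n =>
      dickson (X : Fin n → MvPolynomial (Fin n) (ZMod 2)) (i + 1) := by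
  have : Algebra.IsIntegral (dicksonAlgebra (X : Fin n → MvPolynomial (Fin n) (ZMod 2)))
      (MvPolynomial (Fin n) (ZMod 2)) :=
    isIntegral_of_adjoin_eq_top (adjoin_spanF2_X_eq_top _) dicksonPolynomial_X_mem_lifts
  have : Algebra.IsAlgebraic (Algebra.adjoin (ZMod 2) (Set.range fun i : Fin n =>
      dickson (X : Fin n → MvPolynomial (Fin n) (ZMod 2)) (i + 1)))
      (MvPolynomial (Fin n) (ZMod 2)) :=
    this.isAlgebraic
  refine (Algebra.IsAlgebraic.isTranscendenceBasis_of_le_trdeg_of_finite (ZMod 2) _ ?_).1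
  rw [MvPolynomial.trdeg_of_isDomain, Cardinal.lift_id]

instance isIntegrallyClosed_dicksonAlgebra_X :
    IsIntegrallyClosed (dicksonAlgebra (X : Fin n → MvPolynomial (Fin n) (ZMod 2))) :=
  .of_equiv algebraicIndependent_dickson_X.aevalEquiv.toRingEquiv

theorem mem_dicksonAlgebra_of_forall_bind₁_eq_self {p : MvPolynomial (Fin n) (ZMod 2)}
    (hp : ∀ M : Matrix (Fin n) (Fin n) (ZMod 2), IsUnit M.det → bind₁ M.toMvPolynomial p = p) :
    p ∈ dicksonAlgebra (X : Fin n → MvPolynomial (Fin n) (ZMod 2)) := by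
  set D := dicksonAlgebra (X : Fin n → MvPolynomial (Fin n) (ZMod 2))
  have hinv : Algebra.IsInvariant D (MvPolynomial (Fin n) (ZMod 2))
      (MvPolynomial (Fin n) (ZMod 2) ≃ₐ[D] MvPolynomial (Fin n) (ZMod 2)) :=
    isInvariant_algEquiv_of_adjoin_eq_top (adjoin_spanF2_X_eq_top D) dicksonPolynomial_X_mem_lifts
  have linear (σ : MvPolynomial (Fin n) (ZMod 2) ≃ₐ[D] MvPolynomial (Fin n) (ZMod 2))
      (i : Fin n) : σ (X i) ∈ Submodule.span (ZMod 2) (Set.range X) :=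
    mem_spanF2.1 <| algEquiv_apply_mem_of_prod_mem_lifts dicksonPolynomial_X_mem_lifts σ <|
      mem_spanF2.2 <| Submodule.subset_span ⟨i, rfl⟩
  obtain ⟨d, rfl⟩ := hinv.isInvariant p fun σ => by
    obtain ⟨M, hM, hσM⟩ := exists_isUnit_det_and_eq_bind₁_toMvPolynomial
      (σ := σ.restrictScalars (ZMod 2)) (linear σ) (linear σ.symm)
    exact (hσM p).trans (hp M hM)
  exact d.2

end DicksonTheorem

section Parabolic

variable {n : ℕ}

/-- The subalgebra generated by the Dickson invariants of all variables but the last, together with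
the product of the translates of the last variable by their span. It is the algebra of invariants
of the parabolic subgroup of `GL (n + 1) 𝔽₂` stabilizing that span. -/
def parabolicAlgebra (n : ℕ) : Subalgebra (ZMod 2) (MvPolynomial (Fin (n + 1)) (ZMod 2)) :=
  Algebra.adjoin (ZMod 2) (insert (prodAdd (fun i : Fin n => X i.castSucc) (X (Fin.last n)))
    (Set.range fun i : Fin n => dickson (fun i : Fin n => X i.castSucc) (i + 1)))

lemma bind₁_transvection_eq_self_of_mem_parabolicAlgebra {i j : Fin (n + 1)} (hij : i ≠ j)
    (hj : j ≠ Fin.last n) (c : ZMod 2) {p : MvPolynomial (Fin (n + 1)) (ZMod 2)}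
    (hp : p ∈ parabolicAlgebra n) :
    bind₁ (Matrix.transvection i j c).toMvPolynomial p = p := by
  set φ := bind₁ (Matrix.transvection i j c).toMvPolynomial
  set V := Submodule.span (ZMod 2)
    (Set.range fun i : Fin n => (X i.castSucc : MvPolynomial (Fin (n + 1)) (ZMod 2)))
  have hφ : Function.Injective φ :=
    bind₁_toMvPolynomial_injective (by simp [Matrix.det_transvection_of_ne i j hij])
  have sub_mem_V (k : Fin (n + 1)) : φ (X k) - X k ∈ V := by
    obtain ⟨j, rfl⟩ := Fin.exists_castSucc_eq.2 hj
    rw [bind₁_X_right, toMvPolynomial_transvection, add_sub_cancel_left]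
    split_ifs
    · exact Submodule.smul_mem _ _ (Submodule.subset_span ⟨j, rfl⟩)
    · exact zero_mem _
  have mem_V (k : Fin n) : φ (X k.castSucc) ∈ V :=
    (Submodule.sub_mem_iff_left V (Submodule.subset_span ⟨k, rfl⟩)).1 (sub_mem_V _)
  refine AlgHom.adjoin_le_equalizer φ (AlgHom.id _ _) ?_ hp
  rintro _ (rfl | ⟨k, rfl⟩)
  · exact map_prodAdd_of_forall_mem_span hφ mem_V (sub_mem_V _)
  · exact map_dickson_of_forall_mem_span hφ mem_V _

theorem stmt_12_general (e : Equiv.Perm (Fin (n + 1))) (he : e (Fin.last n) ≠ Fin.last n)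
    (β : MvPolynomial (Fin (n + 1)) (ZMod 2)) (hβ : β ∈ parabolicAlgebra n)
    (heβ : rename e β = β) :
    β ∈ dicksonAlgebra (X : Fin (n + 1) → MvPolynomial (Fin (n + 1)) (ZMod 2)) := by
  refine mem_dicksonAlgebra_of_forall_bind₁_eq_self fun M hM =>
    bind₁_toMvPolynomial_eq_self_of_forall_transvection (fun i j hij => ?_) hM
  rcases ne_or_eq j (Fin.last n) with hj | rfl
  · exact bind₁_transvection_eq_self_of_mem_parabolicAlgebra hij hj 1 hβ
  · have hlast : e.symm (Fin.last n) ≠ Fin.last n := fun h => he (e.symm_apply_eq.1 h).symm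
    have hfix := bind₁_transvection_eq_self_of_mem_parabolicAlgebra
      (e.symm.injective.ne hij) hlast 1 hβ
    have hconj := rename_bind₁_transvection e (e.symm i) (e.symm (Fin.last n)) 1 β
    rw [hfix, heβ, e.apply_symm_apply, e.apply_symm_apply] at hconj
    exact hconj.symm

end Parabolic

lemma dicksonAlgebra_X_four :
    dicksonAlgebra (X : Fin 4 → R4) = Algebra.adjoin (ZMod 2) {a8, a12, a14, a15} := by
  have hX : (X : Fin 4 → R4) = ![xP, yP, zP, wP] := by ext1 i; fin_cases i <;> rfl
  rw [dicksonAlgebra, hX]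
  congr 1
  ext p
  simp [Fin.exists_fin_succ, a8, a12, a14, a15, eq_comm]

lemma parabolicAlgebra_three :
    parabolicAlgebra 3 = Algebra.adjoin (ZMod 2) {b4, b6, b7, b8} := by
  have hX : (fun i : Fin 3 => (X i.castSucc : R4)) = ![xP, yP, zP] := by
    ext1 i; fin_cases i <;> rfl
  have hrange : Set.range (fun i : Fin 3 => dickson ![xP, yP, zP] (i + 1)) = {b4, b6, b7} := by
    ext p
    simp [Fin.exists_fin_succ, b4, b6, b7, eq_comm]
  rw [parabolicAlgebra, hX, hrange]
  change Algebra.adjoin (ZMod 2) {b8, b4, b6, b7} = _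
  rw [Set.insert_comm b8, Set.insert_comm b8, Set.pair_comm b8]

lemma kappaEnd_eq_rename_swap : kappaEnd = rename (Equiv.swap (2 : Fin 4) 3) := by
  refine algHom_ext fun i => ?_
  rw [kappaEnd, aeval_X, rename_X]
  fin_cases i <;> rfl

theorem stmt_12 (β : R4) (hβ : β ∈ Algebra.adjoin (ZMod 2) {b4, b6, b7, b8})
    (hκ : kappaEnd β = β) :
    β ∈ Algebra.adjoin (ZMod 2) {a8, a12, a14, a15} := by
  rw [← parabolicAlgebra_three] at hβ
  rw [kappaEnd_eq_rename_swap] at hκ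
  rw [← dicksonAlgebra_X_four]
  exact stmt_12_general (Equiv.swap 2 3) (by decide) β hβ hκ
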